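/- (Concentration corollary of the coin-flipping game, as used in the mistake-bound analysis of POP.) In the setting of the adaptive coin-flipping game with initial budget k and m rounds (adapted biases p_i ∈ [0, 5/6], q_i ∈ [p_i/5, 1 − p_i], outcomes X_i with conditional probabilities p_i of reward and q_i of budget loss, rewards accruing only while the budget is positive), for every 0 < β < 1 it holds that ℙ[reward_m > 18k + 18 + 6·ln(1/β)] ≤ β. -/

import Mathlib

open MeasureTheory

/-!
Fix weights `a, b ≥ 0` and follow the potential `exp (a * reward + b * budget⁺)`. While the budget
is positive, a reward multiplies it by `exp a` and a loss by `exp (-b)`; afterwards it is frozen. So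
it cannot grow in expectation if the conditional probabilities `p` of a reward and `q` of a loss
satisfy `(exp a - 1) * p ≤ (1 - exp (-b)) * q`. This gives `𝔼[exp (a * reward)] ≤ exp (b * k)`, and
Chernoff's bound yields the tail. Biases with `p ≤ 5 * q` allow `a = 1 / 6` and `b = 3`.
-/

open ProbabilityTheory

section CondExp

variable {Ω : Type*} {m m0 : MeasurableSpace Ω} {μ : Measure Ω}

theorem integral_mul_nonpos_of_condExp_nonpos {f g : Ω → ℝ} (hm : m ≤ m0)
    [SigmaFinite (μ.trim hm)] (hf : StronglyMeasurable[m] f) (hf_nonneg : 0 ≤ f)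
    (hg : Integrable g μ) (hfg : Integrable (f * g) μ) (hg_nonpos : μ[g | m] ≤ᵐ[μ] 0) :
    ∫ ω, (f * g) ω ∂μ ≤ 0 := by
  rw [← integral_condExp hm]
  refine integral_nonpos_of_ae ?_
  filter_upwards [condExp_mul_of_stronglyMeasurable_left hf hfg hg, hg_nonpos] with ω hpull hω
  rw [hpull]
  exact mul_nonpos_of_nonneg_of_nonpos (hf_nonneg ω) hω

theorem condExp_smul_indicator_sub_smul_indicator [IsFiniteMeasure μ] {s t : Set Ω}
    (hs : MeasurableSet s) (ht : MeasurableSet t) (u v : ℝ) :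
    μ[u • s.indicator (fun _ => (1 : ℝ)) - v • t.indicator (fun _ => (1 : ℝ)) | m] =ᵐ[μ]
      u • μ⟦s | m⟧ - v • μ⟦t | m⟧ := by
  have integrable_indicator {A : Set Ω} (hA : MeasurableSet A) :
      Integrable (A.indicator fun _ => (1 : ℝ)) μ := (integrable_const 1).indicator hA
  exact (condExp_sub ((integrable_indicator hs).smul u) ((integrable_indicator ht).smul v) m).trans
    ((condExp_smul u _ m).sub (condExp_smul v _ m))

end CondExp

/-- The exponential potential of a player holding `r` rewards and `n` units of budget, with weights
`a` and `b`. The positive part keeps it constant once the budget is exhausted, although the budget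
itself continues to decrease. -/
noncomputable def coinPotential (a b : ℝ) (r n : ℤ) : ℝ :=
  Real.exp (a * r + b * (n⁺ : ℤ))

namespace coinPotential

variable {a b : ℝ} {r n : ℤ}

theorem pos : 0 < coinPotential a b r n := Real.exp_pos _

theorem add_one_left : coinPotential a b (r + 1) n = Real.exp a * coinPotential a b r n := by
  rw [coinPotential, coinPotential, ← Real.exp_add]
  push_cast
  ring_nf

theorem sub_one_right (hn : 0 < n) :
    coinPotential a b r (n - 1) = Real.exp (-b) * coinPotential a b r n := by
  rw [coinPotential, coinPotential, ← Real.exp_add, posPart_of_nonneg (by lia),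
    posPart_of_nonneg hn.le]
  push_cast
  ring_nf

theorem sub_one_right_of_nonpos (hn : n ≤ 0) :
    coinPotential a b r (n - 1) = coinPotential a b r n := by
  rw [coinPotential, coinPotential, posPart_of_nonpos (by lia), posPart_of_nonpos hn]

theorem mono (ha : 0 ≤ a) (hb : 0 ≤ b) {r' n' : ℤ} (hr : r ≤ r') (hn : n ≤ n') :
    coinPotential a b r n ≤ coinPotential a b r' n' := by
  have hn' : n⁺ ≤ n'⁺ := posPart_mono hn
  unfold coinPotential
  gcongr

theorem exp_mul_le (hb : 0 ≤ b) : Real.exp (a * r) ≤ coinPotential a b r n := by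
  have hn : (0 : ℝ) ≤ (n⁺ : ℤ) := mod_cast posPart_nonneg n
  exact Real.exp_le_exp.2 (le_add_of_nonneg_right (mul_nonneg hb hn))

end coinPotential

/-- The bookkeeping of the coin-flipping game with initial budget `k`: the outcome `X i` of round
`i` is `1` for a reward and `2` for a loss. Rounds are numbered from `1`, and the budget keeps
decreasing below `0`. -/
structure IsCoinGame {Ω : Type*} (k : ℕ) (X : ℕ → Ω → ℕ) (reward budget : ℕ → Ω → ℤ) : Prop where
  reward_zero : ∀ ω, reward 0 ω = 0
  budget_zero : ∀ ω, budget 0 ω = k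
  reward_succ : ∀ i ω, reward (i + 1) ω =
    if X (i + 1) ω = 1 ∧ 0 < budget i ω then reward i ω + 1 else reward i ω
  budget_succ : ∀ i ω, budget (i + 1) ω =
    if X (i + 1) ω = 2 then budget i ω - 1 else budget i ω

namespace IsCoinGame

variable {Ω : Type*} {k : ℕ} {X : ℕ → Ω → ℕ} {reward budget : ℕ → Ω → ℤ} {a b : ℝ}

theorem reward_le (h : IsCoinGame k X reward budget) (i : ℕ) (ω : Ω) : reward i ω ≤ i := by
  induction i with
  | zero => simp [h.reward_zero]
  | succ i ih =>
    rw [h.reward_succ]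
    split_ifs <;> lia

theorem budget_le (h : IsCoinGame k X reward budget) (i : ℕ) (ω : Ω) : budget i ω ≤ k := by
  induction i with
  | zero => simp [h.budget_zero]
  | succ i ih =>
    rw [h.budget_succ]
    split_ifs <;> lia

theorem coinPotential_succ (h : IsCoinGame k X reward budget) (i : ℕ) :
    (fun ω => coinPotential a b (reward (i + 1) ω) (budget (i + 1) ω)) =
      (fun ω => coinPotential a b (reward i ω) (budget i ω)) +
        {ω | 0 < budget i ω}.indicator (fun ω => coinPotential a b (reward i ω) (budget i ω)) *
          ((Real.exp a - 1) • {ω | X (i + 1) ω = 1}.indicator (fun _ => (1 : ℝ)) -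
            (1 - Real.exp (-b)) • {ω | X (i + 1) ω = 2}.indicator (fun _ => (1 : ℝ))) := by
  funext ω
  simp only [h.reward_succ, h.budget_succ, Pi.add_apply, Pi.mul_apply, Pi.sub_apply, Pi.smul_apply,
    smul_eq_mul, Set.indicator_apply, Set.mem_ofPred_eq]
  rcases lt_or_ge 0 (budget i ω) with hpos | hnonpos
  · by_cases hgain : X (i + 1) ω = 1
    · simp only [hgain, hpos, coinPotential.add_one_left, and_self, if_true, OfNat.one_ne_ofNat,
        if_false]
      ring
    · by_cases hloss : X (i + 1) ω = 2
      · simp only [hloss, hpos, coinPotential.sub_one_right, OfNat.ofNat_ne_one, if_true, if_false,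
          false_and]
        ring
      · simp [hgain, hloss]
  · split_ifs <;> simp_all [coinPotential.sub_one_right_of_nonpos, hnonpos.not_gt]

section Probability

variable {m0 : MeasurableSpace Ω} {𝓕 : Filtration ℕ m0}

theorem measurable_budget (h : IsCoinGame k X reward budget) {i : ℕ}
    (hX : ∀ j < i, Measurable[𝓕 (j + 1)] (X (j + 1))) : Measurable[𝓕 i] (budget i) := by
  induction i with
  | zero =>
    rw [funext h.budget_zero]
    exact measurable_const
  | succ i ih =>
    have hbudget := (ih fun j hj => hX j (by lia)).mono (𝓕.mono i.le_succ) le_rfl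
    rw [funext (h.budget_succ i)]
    exact .ite (hX i i.lt_succ_self (measurableSet_singleton 2)) (hbudget.sub_const 1) hbudget

theorem measurable_reward (h : IsCoinGame k X reward budget) {i : ℕ}
    (hX : ∀ j < i, Measurable[𝓕 (j + 1)] (X (j + 1))) : Measurable[𝓕 i] (reward i) := by
  induction i with
  | zero =>
    rw [funext h.reward_zero]
    exact measurable_const
  | succ i ih =>
    have hX' : ∀ j < i, Measurable[𝓕 (j + 1)] (X (j + 1)) := fun j hj => hX j (by lia)
    have hreward := (ih hX').mono (𝓕.mono i.le_succ) le_rfl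
    have hbudget := (h.measurable_budget hX').mono (𝓕.mono i.le_succ) le_rfl
    have hgain : MeasurableSet[𝓕 (i + 1)] {ω | X (i + 1) ω = 1 ∧ 0 < budget i ω} :=
      (hX i i.lt_succ_self (measurableSet_singleton 1)).inter (hbudget measurableSet_Ioi)
    rw [funext (h.reward_succ i)]
    exact .ite hgain (hreward.add_const 1) hreward

theorem measurable_coinPotential (h : IsCoinGame k X reward budget) {i : ℕ}
    (hX : ∀ j < i, Measurable[𝓕 (j + 1)] (X (j + 1))) :
    Measurable[𝓕 i] fun ω => coinPotential a b (reward i ω) (budget i ω) :=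
  (measurable_of_countable fun x : ℤ × ℤ => coinPotential a b x.1 x.2).comp
    ((h.measurable_reward hX).prodMk (h.measurable_budget hX))

variable {μ : Measure Ω}

theorem integrable_coinPotential [IsFiniteMeasure μ] (h : IsCoinGame k X reward budget)
    (ha : 0 ≤ a) (hb : 0 ≤ b) {i : ℕ} (hX : ∀ j < i, Measurable[𝓕 (j + 1)] (X (j + 1))) :
    Integrable (fun ω => coinPotential a b (reward i ω) (budget i ω)) μ := by
  refine .of_bound ((h.measurable_coinPotential hX).mono (𝓕.le i) le_rfl).aestronglyMeasurable
    (coinPotential a b i k) (.of_forall fun ω => ?_)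
  rw [Real.norm_of_nonneg coinPotential.pos.le]
  exact coinPotential.mono ha hb (h.reward_le i ω) (h.budget_le i ω)

theorem integral_coinPotential_succ_le [IsFiniteMeasure μ] (h : IsCoinGame k X reward budget)
    (ha : 0 ≤ a) (hb : 0 ≤ b) {i : ℕ} (hX : ∀ j < i + 1, Measurable[𝓕 (j + 1)] (X (j + 1)))
    (hbias : (Real.exp a - 1) • μ⟦{ω | X (i + 1) ω = 1} | 𝓕 i⟧ ≤ᵐ[μ]
      (1 - Real.exp (-b)) • μ⟦{ω | X (i + 1) ω = 2} | 𝓕 i⟧) :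
    ∫ ω, coinPotential a b (reward (i + 1) ω) (budget (i + 1) ω) ∂μ ≤
      ∫ ω, coinPotential a b (reward i ω) (budget i ω) ∂μ := by
  have hX' : ∀ j < i, Measurable[𝓕 (j + 1)] (X (j + 1)) := fun j hj => hX j (by lia)
  have houtcome (x : ℕ) : MeasurableSet {ω | X (i + 1) ω = x} :=
    𝓕.le (i + 1) _ (hX i i.lt_succ_self (measurableSet_singleton x))
  set Φ : Ω → ℝ := fun ω => coinPotential a b (reward i ω) (budget i ω)
  set active : Set Ω := {ω | 0 < budget i ω}
  set change : Ω → ℝ := (Real.exp a - 1) • {ω | X (i + 1) ω = 1}.indicator (fun _ => (1 : ℝ)) -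
    (1 - Real.exp (-b)) • {ω | X (i + 1) ω = 2}.indicator (fun _ => (1 : ℝ))
  have hΦ : Integrable Φ μ := h.integrable_coinPotential ha hb hX'
  have hsucc : (fun ω => coinPotential a b (reward (i + 1) ω) (budget (i + 1) ω)) =
    Φ + active.indicator Φ * change := h.coinPotential_succ i
  have hincr : Integrable (active.indicator Φ * change) μ := by
    rw [← sub_eq_of_eq_add' hsucc]
    exact (h.integrable_coinPotential ha hb hX).sub hΦ
  have hchange : Integrable change μ :=
    (((integrable_const 1).indicator (houtcome 1)).smul _).sub
      (((integrable_const 1).indicator (houtcome 2)).smul _)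
  have hdrift : μ[change | 𝓕 i] ≤ᵐ[μ] 0 := by
    filter_upwards [condExp_smul_indicator_sub_smul_indicator (houtcome 1) (houtcome 2) _ _,
      hbias] with ω hω hω_bias
    rw [hω]
    exact sub_nonpos.2 hω_bias
  have hactive : StronglyMeasurable[𝓕 i] (active.indicator Φ) :=
    ((h.measurable_coinPotential hX').indicator
      (h.measurable_budget hX' measurableSet_Ioi)).stronglyMeasurable
  rw [hsucc, integral_add' hΦ hincr]
  exact add_le_of_nonpos_right <| integral_mul_nonpos_of_condExp_nonpos (𝓕.le i) hactive
    (Set.indicator_nonneg fun _ _ => coinPotential.pos.le) hchange hincr hdrift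

variable {m : ℕ}

theorem integral_coinPotential_le [IsProbabilityMeasure μ] (h : IsCoinGame k X reward budget)
    (ha : 0 ≤ a) (hb : 0 ≤ b)
    (hX : ∀ i < m, Measurable[𝓕 (i + 1)] (X (i + 1)))
    (hbias : ∀ i < m, (Real.exp a - 1) • μ⟦{ω | X (i + 1) ω = 1} | 𝓕 i⟧ ≤ᵐ[μ]
      (1 - Real.exp (-b)) • μ⟦{ω | X (i + 1) ω = 2} | 𝓕 i⟧) :
    ∫ ω, coinPotential a b (reward m ω) (budget m ω) ∂μ ≤ Real.exp (b * k) := by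
  induction m with
  | zero => simp [h.reward_zero, h.budget_zero, coinPotential]
  | succ m ih =>
    exact (h.integral_coinPotential_succ_le ha hb hX (hbias m m.lt_succ_self)).trans
      (ih (fun i hi => hX i (by lia)) fun i hi => hbias i (by lia))

theorem integrable_exp_mul_reward [IsFiniteMeasure μ] (h : IsCoinGame k X reward budget)
    (ha : 0 ≤ a) (hX : ∀ i < m, Measurable[𝓕 (i + 1)] (X (i + 1))) :
    Integrable (fun ω => Real.exp (a * reward m ω)) μ := by
  simpa [coinPotential] using h.integrable_coinPotential (b := 0) (μ := μ) ha le_rfl hX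

theorem mgf_reward_le [IsProbabilityMeasure μ] (h : IsCoinGame k X reward budget)
    (ha : 0 ≤ a) (hb : 0 ≤ b)
    (hX : ∀ i < m, Measurable[𝓕 (i + 1)] (X (i + 1)))
    (hbias : ∀ i < m, (Real.exp a - 1) • μ⟦{ω | X (i + 1) ω = 1} | 𝓕 i⟧ ≤ᵐ[μ]
      (1 - Real.exp (-b)) • μ⟦{ω | X (i + 1) ω = 2} | 𝓕 i⟧) :
    mgf (fun ω => (reward m ω : ℝ)) μ a ≤ Real.exp (b * k) :=
  (integral_mono (h.integrable_exp_mul_reward ha hX) (h.integrable_coinPotential ha hb hX)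
    fun _ => coinPotential.exp_mul_le hb).trans (h.integral_coinPotential_le ha hb hX hbias)

theorem measureReal_le_reward_le [IsProbabilityMeasure μ] (h : IsCoinGame k X reward budget)
    (ha : 0 ≤ a) (hb : 0 ≤ b)
    (hX : ∀ i < m, Measurable[𝓕 (i + 1)] (X (i + 1)))
    (hbias : ∀ i < m, (Real.exp a - 1) • μ⟦{ω | X (i + 1) ω = 1} | 𝓕 i⟧ ≤ᵐ[μ]
      (1 - Real.exp (-b)) • μ⟦{ω | X (i + 1) ω = 2} | 𝓕 i⟧) (c : ℝ) :
    μ.real {ω | c ≤ reward m ω} ≤ Real.exp (b * k - a * c) :=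
  calc μ.real {ω | c ≤ reward m ω}
      ≤ Real.exp (-a * c) * mgf (fun ω => (reward m ω : ℝ)) μ a :=
        measure_ge_le_exp_mul_mgf c ha (h.integrable_exp_mul_reward ha hX)
    _ ≤ Real.exp (-a * c) * Real.exp (b * k) := by
        gcongr
        exact h.mgf_reward_le ha hb hX hbias
    _ = Real.exp (b * k - a * c) := by
        rw [← Real.exp_add]
        ring_nf

end Probability

end IsCoinGame

theorem exp_one_sixth_le : Real.exp (1 / 6) ≤ 19 / 16 := by
  refine le_of_pow_le_pow_left₀ (n := 6) (by norm_num) (by norm_num) ?_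
  calc Real.exp (1 / 6) ^ 6 = Real.exp 1 := by
        rw [← Real.exp_nat_mul]
        norm_num
    _ ≤ (19 / 16) ^ 6 := by linarith [Real.exp_one_lt_d9]

theorem exp_neg_three_le : Real.exp (-3) ≤ 1 / 16 := by
  have hexp : (16 : ℝ) ≤ Real.exp 3 :=
    calc (16 : ℝ) ≤ 2.7 ^ 3 := by norm_num
      _ ≤ Real.exp 1 ^ 3 := by
        gcongr
        linarith [Real.exp_one_gt_d9]
      _ = Real.exp 3 := by simp
  rw [Real.exp_neg, one_div]
  exact inv_anti₀ (by norm_num) hexp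

theorem exp_one_sixth_sub_one_mul_le {x y : ℝ} (hx : 0 ≤ x) (hxy : x / 5 ≤ y) :
    (Real.exp (1 / 6) - 1) * x ≤ (1 - Real.exp (-3)) * y :=
  calc (Real.exp (1 / 6) - 1) * x ≤ 3 / 16 * x := by
        gcongr
        linarith [exp_one_sixth_le]
    _ = 15 / 16 * (x / 5) := by ring
    _ ≤ (1 - Real.exp (-3)) * y := by
        have : 0 ≤ x / 5 := by positivity
        gcongr
        · linarith [exp_neg_three_le]
        · linarith [exp_neg_three_le]

theorem coin_game_concentration_general {Ω : Type*} {m0 : MeasurableSpace Ω}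
    (μ : Measure Ω) [IsProbabilityMeasure μ] (𝓕 : Filtration ℕ m0) {m k : ℕ}
    {X : ℕ → Ω → ℕ} {reward budget : ℕ → Ω → ℤ} (h : IsCoinGame k X reward budget)
    {a b : ℝ} (ha : 0 < a) (hb : 0 ≤ b)
    (hX : ∀ i < m, Measurable[𝓕 (i + 1)] (X (i + 1)))
    (hbias : ∀ i < m, (Real.exp a - 1) • μ⟦{ω | X (i + 1) ω = 1} | 𝓕 i⟧ ≤ᵐ[μ]
      (1 - Real.exp (-b)) • μ⟦{ω | X (i + 1) ω = 2} | 𝓕 i⟧)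
    {β : ℝ} (hβ : 0 < β) :
    μ {ω | (b * k + Real.log (1 / β)) / a ≤ reward m ω} ≤ ENNReal.ofReal β := by
  rw [← ofReal_measureReal]
  refine ENNReal.ofReal_le_ofReal ((h.measureReal_le_reward_le ha.le hb hX hbias _).trans_eq ?_)
  rw [mul_div_cancel₀ _ ha.ne', sub_add_cancel_left, one_div, Real.log_inv, neg_neg,
    Real.exp_log hβ]

/-- Concentration corollary of the adaptive coin-flipping game (as used in the
mistake-bound analysis of POP): with initial budget `k`, for every `0 < β < 1` the
probability that the adversary collects more than `18k + 18 + 6·ln(1/β)` rewards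
is at most `β`. -/
theorem coin_game_concentration {Ω : Type*} {m0 : MeasurableSpace Ω}
    (μ : Measure Ω) [IsProbabilityMeasure μ]
    (𝓕 : Filtration ℕ m0) (m : ℕ) (k : ℕ)
    (p q : ℕ → Ω → ℝ) (X : ℕ → Ω → ℕ)
    (hX_range : ∀ i ω, X i ω ≤ 2)
    (hX_meas : ∀ i, 1 ≤ i → i ≤ m → Measurable[𝓕 i] (X i))
    (hp_meas : ∀ i, 1 ≤ i → i ≤ m → Measurable[𝓕 (i - 1)] (p i))
    (hq_meas : ∀ i, 1 ≤ i → i ≤ m → Measurable[𝓕 (i - 1)] (q i))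
    (hp_bound : ∀ i, 1 ≤ i → i ≤ m → ∀ᵐ ω ∂μ, 0 ≤ p i ω ∧ p i ω ≤ 5 / 6)
    (hq_bound : ∀ i, 1 ≤ i → i ≤ m → ∀ᵐ ω ∂μ, p i ω / 5 ≤ q i ω ∧ q i ω ≤ 1 - p i ω)
    (hcond1 : ∀ i, 1 ≤ i → i ≤ m →
      μ[Set.indicator {ω | X i ω = 1} (fun _ => (1 : ℝ)) | 𝓕 (i - 1)] =ᵐ[μ] p i)
    (hcond2 : ∀ i, 1 ≤ i → i ≤ m →
      μ[Set.indicator {ω | X i ω = 2} (fun _ => (1 : ℝ)) | 𝓕 (i - 1)] =ᵐ[μ] q i)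
    (reward budget : ℕ → Ω → ℤ)
    (hreward0 : ∀ ω, reward 0 ω = 0) (hbudget0 : ∀ ω, budget 0 ω = (k : ℤ))
    (hreward : ∀ i ω, reward (i + 1) ω =
      if X (i + 1) ω = 1 ∧ 0 < budget i ω then reward i ω + 1 else reward i ω)
    (hbudget : ∀ i ω, budget (i + 1) ω =
      if X (i + 1) ω = 2 then budget i ω - 1 else budget i ω)
    (β : ℝ) (hβ0 : 0 < β) (hβ1 : β < 1) :
    μ {ω | 18 * (k : ℝ) + 18 + 6 * Real.log (1 / β) < (reward m ω : ℝ)} ≤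
      ENNReal.ofReal β := by
  have hbias (i : ℕ) (hi : i < m) :
      (Real.exp (1 / 6) - 1) • μ⟦{ω | X (i + 1) ω = 1} | 𝓕 i⟧ ≤ᵐ[μ]
        (1 - Real.exp (-3)) • μ⟦{ω | X (i + 1) ω = 2} | 𝓕 i⟧ := by
    filter_upwards [hcond1 (i + 1) i.succ_pos hi, hcond2 (i + 1) i.succ_pos hi,
      hp_bound (i + 1) i.succ_pos hi, hq_bound (i + 1) i.succ_pos hi] with ω hgain hloss hp hq
    calc (Real.exp (1 / 6) - 1) * (μ⟦{ω | X (i + 1) ω = 1} | 𝓕 i⟧) ω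
        = (Real.exp (1 / 6) - 1) * p (i + 1) ω := congrArg _ hgain
      _ ≤ (1 - Real.exp (-3)) * q (i + 1) ω := exp_one_sixth_sub_one_mul_le hp.1 hq.1
      _ = (1 - Real.exp (-3)) * (μ⟦{ω | X (i + 1) ω = 2} | 𝓕 i⟧) ω := congrArg _ hloss.symm
  have hthreshold : (3 * k + Real.log (1 / β)) / (1 / 6) ≤
      18 * (k : ℝ) + 18 + 6 * Real.log (1 / β) := by linarith
  exact (measure_mono fun ω hω => hthreshold.trans (le_of_lt hω)).trans <|
    coin_game_concentration_general μ 𝓕 ⟨hreward0, hbudget0, hreward, hbudget⟩ (by norm_num)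
      (by norm_num) (fun i hi => hX_meas (i + 1) i.succ_pos hi) hbias hβ0
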